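/- Let (X,d) be a metric space and ν a Borel probability measure on X satisfying the Gaussian enlargement property with parameter τ > 0. Let H > 0 and let z ∈ X satisfy ∫_X d(z,y)² dν(y) ≤ H·τ. Then for every A > 1 and every r ≥ √(A·H·τ), ν(X \ B(z,r)) ≤ 1 - Φ(Φ⁻¹(1 - 1/A) + (r - √(A·H·τ))/√(2τ)). In particular, for every r ≥ √(2Hτ), ν(X \ B(z,r)) ≤ Φ(-(r - √(2Hτ))/√(2τ)). -/

import Mathlib

open Real MeasureTheory

/-- The standard Gaussian density. -/
noncomputable def gaussPdf (z : ℝ) : ℝ := (Real.sqrt (2 * Real.pi))⁻¹ * Real.exp (-z ^ 2 / 2)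

/-- The standard normal CDF. -/
noncomputable def Phi (r : ℝ) : ℝ := ∫ z in Set.Iic r, gaussPdf z

/-- The inverse of the standard normal CDF. -/
noncomputable def PhiInv : ℝ → ℝ := Function.invFun Phi

/-- The open `r`-enlargement `E_r = {y : d(y,E) < r}` of a set (with `E_0 = E`). -/
noncomputable def enlarge {X : Type*} [MetricSpace X] (E : Set X) (r : ℝ) : Set X :=
  if r = 0 then E else Metric.thickening r E

/-- A Borel probability measure `ν` on a metric space satisfies the Gaussian enlargement
property with parameter `τ > 0` if for every Borel set `E` with `0 < ν(E) < 1` and every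
`r ≥ 0`, `ν(E_r) ≥ Φ(Φ⁻¹(ν(E)) + r/√(2τ))`. -/
def GaussianEnlargement {X : Type*} [MetricSpace X] [MeasurableSpace X]
    (ν : Measure X) (τ : ℝ) : Prop :=
  ∀ E : Set X, MeasurableSet E → 0 < ν E → ν E < 1 → ∀ r : ℝ, 0 ≤ r →
    ENNReal.ofReal (Phi (PhiInv (ν E).toReal + r / Real.sqrt (2 * τ))) ≤ ν (enlarge E r)

/-- The distance `d(A,B) = inf {d(a,b) : a ∈ A, b ∈ B}` between two sets. -/
noncomputable def setDist {X : Type*} [MetricSpace X] (A B : Set X) : ℝ :=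
  sInf (Set.image2 dist A B)


lemma gaussPdf_eq : gaussPdf = ProbabilityTheory.gaussianPDFReal 0 1 := by
  funext x
  simp [gaussPdf, ProbabilityTheory.gaussianPDFReal]

lemma gaussPdf_integrable : Integrable gaussPdf := by
  rw [gaussPdf_eq]; exact ProbabilityTheory.integrable_gaussianPDFReal 0 1

lemma gaussPdf_integral : ∫ x, gaussPdf x = 1 := by
  rw [gaussPdf_eq]; exact ProbabilityTheory.integral_gaussianPDFReal_eq_one 0 (by norm_num)

lemma gaussPdf_pos (x : ℝ) : 0 < gaussPdf x := by
  unfold gaussPdf; positivity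

lemma Phi_sub (a b : ℝ) : Phi b - Phi a = ∫ x in a..b, gaussPdf x :=
  intervalIntegral.integral_Iic_sub_Iic gaussPdf_integrable.integrableOn
    gaussPdf_integrable.integrableOn

lemma Phi_strictMono : StrictMono Phi := by
  intro a b hab
  have h := Phi_sub a b
  have : 0 < ∫ x in a..b, gaussPdf x :=
    intervalIntegral.intervalIntegral_pos_of_pos gaussPdf_integrable.intervalIntegrable
      gaussPdf_pos hab
  linarith

lemma Phi_continuous : Continuous Phi := by
  have h : Phi = fun b => Phi 0 + ∫ x in (0:ℝ)..b, gaussPdf x := by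
    funext b; rw [← Phi_sub]; ring
  rw [h]
  exact continuous_const.add (intervalIntegral.continuous_primitive
    (fun a b => gaussPdf_integrable.intervalIntegrable) 0)

lemma Phi_neg (x : ℝ) : Phi (-x) = 1 - Phi x := by
  have h1 : Phi (-x) = ∫ y in Set.Ioi x, gaussPdf y := by
    have := integral_comp_neg_Iic (-x) gaussPdf
    rw [neg_neg] at this
    rw [← this]
    unfold Phi gaussPdf
    simp
  have h2 := intervalIntegral.integral_Iic_add_Ioi (b := x) (f := gaussPdf) (μ := volume)
    gaussPdf_integrable.integrableOn gaussPdf_integrable.integrableOn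
  rw [gaussPdf_integral] at h2
  rw [h1]; unfold Phi; linarith

lemma Phi_nonneg (x : ℝ) : 0 ≤ Phi x :=
  integral_nonneg fun y => (gaussPdf_pos y).le

lemma Phi_le_one (x : ℝ) : Phi x ≤ 1 := by
  have := Phi_nonneg (-x)
  rw [Phi_neg] at this; linarith

lemma Phi_tendsto_top : Filter.Tendsto Phi Filter.atTop (nhds 1) := by
  have h := intervalIntegral_tendsto_integral_Ioi 0 gaussPdf_integrable.integrableOn
    (Filter.tendsto_id (α := ℝ) (x := Filter.atTop))
  have h2 := h.const_add (Phi 0)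
  have h3 := intervalIntegral.integral_Iic_add_Ioi (b := 0) (f := gaussPdf) (μ := volume)
    gaussPdf_integrable.integrableOn gaussPdf_integrable.integrableOn
  rw [gaussPdf_integral] at h3
  have h4 : Phi 0 + ∫ x in Set.Ioi 0, gaussPdf x = 1 := h3
  rw [h4] at h2
  refine h2.congr fun b => ?_
  simp only [id]
  rw [← Phi_sub]; ring

lemma Phi_PhiInv {p : ℝ} (h0 : 0 < p) (h1 : p < 1) : Phi (PhiInv p) = p := by
  apply Function.invFun_eq
  obtain ⟨b, hb⟩ := (Phi_tendsto_top.eventually (lt_mem_nhds h1)).exists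
  obtain ⟨a, ha⟩ := (Phi_tendsto_top.eventually (lt_mem_nhds (show 1 - p < 1 by linarith))).exists
  have ha' : Phi (-a) < p := by rw [Phi_neg]; linarith
  exact mem_range_of_exists_le_of_exists_ge Phi_continuous ⟨-a, ha'.le⟩ ⟨b, hb.le⟩

lemma PhiInv_mono {p q : ℝ} (h0 : 0 < p) (hpq : p ≤ q) (h1 : q < 1) : PhiInv p ≤ PhiInv q := by
  rw [← Phi_strictMono.le_iff_le, Phi_PhiInv h0 (by linarith), Phi_PhiInv (by linarith) h1]
  exact hpq

lemma PhiInv_half : PhiInv (1 / 2) = 0 := by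
  apply Phi_strictMono.injective
  rw [Phi_PhiInv (by norm_num) (by norm_num)]
  have := Phi_neg 0
  rw [neg_zero] at this; linarith

/-- Gaussian-profile tails from an `H`-center: if `ν` satisfies the Gaussian enlargement
property with parameter `τ` and `∫ d(z,y)² dν ≤ Hτ`, then for every `A > 1` and every
`r ≥ √(AHτ)`, `ν(X ∖ B(z,r)) ≤ 1 - Φ(Φ⁻¹(1 - 1/A) + (r - √(AHτ))/√(2τ))`; in particular
`ν(X ∖ B(z,r)) ≤ Φ(-(r - √(2Hτ))/√(2τ))` for `r ≥ √(2Hτ)`. -/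
theorem stmt14 {X : Type*} [MetricSpace X] [MeasurableSpace X] [BorelSpace X]
    (ν : Measure X) [IsProbabilityMeasure ν] (τ : ℝ) (hτ : 0 < τ)
    (hGEP : GaussianEnlargement ν τ)
    (H : ℝ) (hH : 0 < H) (z : X)
    (hz : ∫⁻ y, ENNReal.ofReal (dist z y ^ 2) ∂ν ≤ ENNReal.ofReal (H * τ)) :
    (∀ A : ℝ, 1 < A → ∀ r : ℝ, Real.sqrt (A * H * τ) ≤ r →
      (ν (Metric.ball z r)ᶜ).toReal ≤
        1 - Phi (PhiInv (1 - 1 / A) + (r - Real.sqrt (A * H * τ)) / Real.sqrt (2 * τ))) ∧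
    (∀ r : ℝ, Real.sqrt (2 * H * τ) ≤ r →
      (ν (Metric.ball z r)ᶜ).toReal ≤
        Phi (-(r - Real.sqrt (2 * H * τ)) / Real.sqrt (2 * τ))) := by
  have main : ∀ A : ℝ, 1 < A → ∀ r : ℝ, Real.sqrt (A * H * τ) ≤ r →
      (ν (Metric.ball z r)ᶜ).toReal ≤
        1 - Phi (PhiInv (1 - 1 / A) + (r - Real.sqrt (A * H * τ)) / Real.sqrt (2 * τ)) := by
    intro A hA r hr
    have hA0 : 0 < A := by linarith
    set R := Real.sqrt (A * H * τ) with hR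
    have hAHτ : 0 < A * H * τ := by positivity
    have hRsq : R ^ 2 = A * H * τ := Real.sq_sqrt hAHτ.le
    have hRpos : 0 < R := Real.sqrt_pos.2 hAHτ
    have hcompl : ∀ s : ℝ, (ν (Metric.ball z s)ᶜ).toReal = 1 - (ν (Metric.ball z s)).toReal :=
      fun s => probReal_compl_eq_one_sub measurableSet_ball
    -- Markov
    have hM : (ν (Metric.ball z R)ᶜ).toReal ≤ 1 / A := by
      have h1 : ENNReal.ofReal (A * H * τ) * ν (Metric.ball z R)ᶜ ≤ ENNReal.ofReal (H * τ) := by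
        refine le_trans ?_ hz
        refine le_trans ?_ (mul_meas_ge_le_lintegral (by fun_prop) (ENNReal.ofReal (A * H * τ)))
        gcongr
        intro y hy
        have hy' : R ≤ dist z y := by
          simpa [dist_comm] using hy
        refine ENNReal.ofReal_le_ofReal ?_
        rw [← hRsq]
        exact pow_le_pow_left₀ hRpos.le hy' 2
      have h2 := ENNReal.toReal_mono ENNReal.ofReal_ne_top h1
      rw [ENNReal.toReal_mul, ENNReal.toReal_ofReal hAHτ.le,
        ENNReal.toReal_ofReal (by positivity)] at h2
      rw [le_div_iff₀ hA0]
      have h3 : 0 < H * τ := by positivity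
      by_contra hc
      push Not at hc
      nlinarith
    have hinv : 1 / A < 1 := by rw [div_lt_one hA0]; exact hA
    have hinv0 : 0 < 1 / A := by positivity
    have hB := hcompl R
    have hEpos : 0 < (ν (Metric.ball z R)).toReal := by linarith
    have hsub : enlarge (Metric.ball z R) (r - R) ⊆ Metric.ball z r := by
      unfold enlarge
      split_ifs with h
      · exact Metric.ball_subset_ball hr
      · intro y hy
        rw [Metric.mem_thickening_iff] at hy
        obtain ⟨w, hw, hyw⟩ := hy
        rw [Metric.mem_ball] at hw ⊢
        linarith [dist_triangle y w z]
    rw [hcompl r]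
    rcases (prob_le_one (μ := ν) (s := Metric.ball z R)).lt_or_eq with hlt | heq
    · have hlt' : (ν (Metric.ball z R)).toReal < 1 := by
        have := (ENNReal.toReal_lt_toReal (measure_ne_top _ _) ENNReal.one_ne_top).2 hlt
        simpa using this
      have hg := hGEP _ measurableSet_ball (ENNReal.toReal_pos_iff.1 hEpos).1 hlt (r - R)
        (by linarith)
      have hg2 := ENNReal.toReal_mono (measure_ne_top _ _) (hg.trans (measure_mono hsub))
      rw [ENNReal.toReal_ofReal (Phi_nonneg _)] at hg2
      have hm := Phi_strictMono.monotone (add_le_add_left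
        (PhiInv_mono (p := 1 - 1 / A) (by linarith) (by linarith) hlt')
        ((r - R) / Real.sqrt (2 * τ)))
      linarith
    · have h1 : (ν (Metric.ball z R)).toReal ≤ (ν (Metric.ball z r)).toReal :=
        ENNReal.toReal_mono (measure_ne_top _ _) (measure_mono (Metric.ball_subset_ball hr))
      rw [heq, ENNReal.toReal_one] at h1
      have := Phi_le_one (PhiInv (1 - 1 / A) + (r - R) / Real.sqrt (2 * τ))
      linarith
  refine ⟨main, fun r hr => ?_⟩
  have h := main 2 (by norm_num) r hr
  rw [show (1 : ℝ) - 1 / 2 = 1 / 2 by norm_num, PhiInv_half, zero_add, ← Phi_neg] at h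
  rwa [neg_div]
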